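/- On ℝ⁶ with coordinates (q₁,q₂,q₃,p₁,p₂,p₃) define H = ½(((cos(2πq₃) − q₃·sin(2πq₃))p₁ + sin(2πq₃)p₂)² + p₃²), I₂ = p₁, and I₃ = sin(2πp₂/p₁)·exp(−p₁^{−2}) for p₁ ≠ 0, extended by 0 on {p₁ = 0}. Then: (i) I₃ is of class C^∞ on ℝ⁶; (ii) {H,I₂} = 0, {H,I₃} = 0 and {I₂,I₃} = 0 identically; (iii) with T(q₁,q₂,q₃,p₁,p₂,p₃) = (q₁,q₂,q₃+1, p₁, p₁+p₂, p₃) one has H ∘ T = H, I₂ ∘ T = I₂ and I₃ ∘ T = I₃; (iv) dH, dI₂, dI₃ are linearly independent on a dense open subset of ℝ⁶. -/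

import Mathlib

/-!
STATEMENT 7 (Jordan-box case): On ℝ⁶ with coordinates (q₁,q₂,q₃,p₁,p₂,p₃), the
functions H = ½(((cos(2πq₃) − q₃·sin(2πq₃))p₁ + sin(2πq₃)p₂)² + p₃²), I₂ = p₁ and
I₃ = sin(2πp₂/p₁)·exp(−p₁^{−2}) (extended by 0 on {p₁ = 0}) satisfy:
(i) I₃ is C^∞; (ii) they pairwise Poisson-commute; (iii) they are invariant under
T = (q₁,q₂,q₃+1, p₁, p₁+p₂, p₃); (iv) their differentials are linearly independent
on a dense open subset of ℝ⁶.
Coordinates: qᵢ = x i for i = 0,1,2 and pᵢ = x (i+3) for i = 0,1,2.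
-/

/-- Partial derivative of a function on ℝ⁶ in the `i`-th coordinate direction. -/
noncomputable def pderiv6 (i : Fin 6) (F : (Fin 6 → ℝ) → ℝ) (x : Fin 6 → ℝ) : ℝ :=
  fderiv ℝ F x (Pi.single i 1)

/-- The canonical Poisson bracket on ℝ⁶ = T*ℝ³:
`{F,G} = Σᵢ (∂F/∂qᵢ · ∂G/∂pᵢ − ∂F/∂pᵢ · ∂G/∂qᵢ)`. -/
noncomputable def poisson6 (F G : (Fin 6 → ℝ) → ℝ) (x : Fin 6 → ℝ) : ℝ :=
  ∑ i : Fin 3,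
    (pderiv6 ⟨i.1, by have := i.isLt; omega⟩ F x *
       pderiv6 ⟨i.1 + 3, by have := i.isLt; omega⟩ G x -
     pderiv6 ⟨i.1 + 3, by have := i.isLt; omega⟩ F x *
       pderiv6 ⟨i.1, by have := i.isLt; omega⟩ G x)

/-!
The function `I₃` is a member of the family `v⁻ᵏ exp (-v⁻²) h (u / v)`, extended by `0` to `v = 0`,
where `h` and its derivatives grow at most polynomially. Its members are continuous, differentiable
with zero derivative on `v = 0`, and their partial derivatives are sums of members: hence they are
smooth. The brackets vanish because `H`, `I₂`, `I₃` depend on `q₃, p₁, p₂, p₃`, on `p₁` and on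
`p₁, p₂`, so that no two of them involve conjugate coordinates. The Jacobian minor in `p₃, p₁, p₂`
is `p₃ · ∂I₃/∂p₂`, which is nonzero on a dense set because `cos (2πp₂/p₁)` is analytic in `p₂`.
-/

open Filter Asymptotics
open scoped Topology ContDiff

section TemperateGrowth

variable {F : Type*} [NormedAddCommGroup F] [NormedSpace ℝ F]

lemma hasTemperateGrowth_deriv {h : ℝ → F} (hh : h.HasTemperateGrowth) :
    (deriv h).HasTemperateGrowth := by
  refine ⟨(contDiff_infty_iff_deriv.1 hh.1).2, fun n => ?_⟩
  obtain ⟨k, C, hC⟩ := hh.2 (n + 1)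
  refine ⟨k, C, fun s => ?_⟩
  simpa only [norm_iteratedFDeriv_eq_norm_iteratedDeriv, iteratedDeriv_succ'] using hC s

lemma hasTemperateGrowth_sin : Real.sin.HasTemperateGrowth := by
  refine ⟨Real.contDiff_sin, fun n => ⟨0, 1, fun s => ?_⟩⟩
  simpa [norm_iteratedFDeriv_eq_norm_iteratedDeriv] using Real.abs_iteratedDeriv_sin_le_one n s

end TemperateGrowth

/-- The factor `v⁻ᵏ exp (-v⁻²)`, extended by `0` to `v = 0`: every negative power of `v` is
absorbed by the exponential. -/
noncomputable def flatFactor (k : ℕ) (v : ℝ) : ℝ :=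
  v⁻¹ ^ k * expNegInvGlue (v ^ 2)

@[simp]
lemma flatFactor_zero_right (k : ℕ) : flatFactor k 0 = 0 := by
  simp [flatFactor]

lemma flatFactor_zero_left_of_ne_zero {v : ℝ} (hv : v ≠ 0) :
    flatFactor 0 v = Real.exp (-(v ^ 2)⁻¹) := by
  have : 0 < v ^ 2 := by positivity
  simp [flatFactor, expNegInvGlue, this.not_ge]

lemma flatFactor_ne_zero (k : ℕ) {v : ℝ} (hv : v ≠ 0) : flatFactor k v ≠ 0 :=
  mul_ne_zero (pow_ne_zero _ (inv_ne_zero hv))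
    (expNegInvGlue.pos_of_pos (by positivity)).ne'

lemma pow_mul_flatFactor_add (k m : ℕ) (v : ℝ) :
    v ^ m * flatFactor (k + m) v = flatFactor k v := by
  rcases eq_or_ne v 0 with rfl | hv
  · simp
  · rw [flatFactor, flatFactor, pow_add, inv_pow v m]
    field_simp

lemma continuous_flatFactor (k : ℕ) : Continuous (flatFactor k) := by
  have h : Continuous fun v : ℝ =>
      v ^ k * ((Polynomial.X ^ k : Polynomial ℝ).eval (v ^ 2)⁻¹ * expNegInvGlue (v ^ 2)) :=
    (continuous_pow k).mul
      ((expNegInvGlue.continuous_polynomial_eval_inv_mul _).comp (continuous_pow 2))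
  refine h.congr fun v => ?_
  rcases eq_or_ne v 0 with rfl | hv
  · simp
  · have hpow : v ^ k * (v ^ 2)⁻¹ ^ k = v⁻¹ ^ k := by
      rw [← mul_pow]
      congr 1
      field_simp
    rw [flatFactor, Polynomial.eval_pow, Polynomial.eval_X, ← mul_assoc, hpow]

lemma hasDerivAt_flatFactor (k : ℕ) {v : ℝ} (hv : v ≠ 0) :
    HasDerivAt (flatFactor k) (-k * flatFactor (k + 1) v + 2 * flatFactor (k + 3) v) v := by
  have hexp : HasDerivAt (fun w : ℝ => expNegInvGlue (w ^ 2))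
      (((v ^ 2)⁻¹ ^ 2 * expNegInvGlue (v ^ 2)) * (2 * v)) v := by
    simpa [Function.comp_def] using
      (expNegInvGlue.hasDerivAt_polynomial_eval_inv_mul 1 (v ^ 2)).comp v (hasDerivAt_pow 2 v)
  have hpow : HasDerivAt (fun w : ℝ => w⁻¹ ^ k) (-k * v⁻¹ ^ (k + 1)) v := by
    refine ((hasDerivAt_inv hv).fun_pow k).congr_deriv ?_
    cases k with
    | zero => simp
    | succ m =>
      rw [Nat.add_sub_cancel, pow_succ _ (m + 1), pow_succ _ m]
      field
  refine (hpow.mul hexp).congr_deriv ?_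
  simp only [flatFactor, pow_add]
  field_simp

section FlatQuotient

variable {F : Type*} [NormedAddCommGroup F] [NormedSpace ℝ F]

/-- The function `(u, v) ↦ v⁻ᵏ exp (-v⁻²) h (u / v)` on the plane, extended by `0` to the line
`v = 0`. The family over all `k` and all `h` of temperate growth is closed under partial
derivatives. -/
noncomputable def flatQuotient (k : ℕ) (h : ℝ → F) (z : ℝ × ℝ) : F :=
  flatFactor k z.2 • h (z.1 / z.2)

lemma flatQuotient_of_snd_eq_zero (k : ℕ) (h : ℝ → F) {z : ℝ × ℝ} (hz : z.2 = 0) :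
    flatQuotient k h z = 0 := by
  simp [flatQuotient, hz]

lemma snd_smul_flatQuotient_succ (k : ℕ) (h : ℝ → F) (z : ℝ × ℝ) :
    z.2 • flatQuotient (k + 1) h z = flatQuotient k h z := by
  simp [flatQuotient, smul_smul, ← pow_mul_flatFactor_add k 1 z.2]

/- Clearing denominators, `|v|ᵐ (1 + |u / v|)ᵐ = (|v| + |u|)ᵐ` is locally bounded, so polynomial
growth of `h` costs only `m` extra powers of `v⁻¹`. -/
lemma norm_flatQuotient_le (k : ℕ) {h : ℝ → F} {m : ℕ} {C : ℝ}
    (hC : ∀ s, ‖h s‖ ≤ C * (1 + ‖s‖) ^ m) (z : ℝ × ℝ) :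
    ‖flatQuotient k h z‖ ≤ |flatFactor (k + m) z.2| * (C * (|z.2| + |z.1|) ^ m) := by
  rcases eq_or_ne z.2 0 with hz | hz
  · simp [flatQuotient_of_snd_eq_zero, hz]
  · have hclear : |z.2| * (1 + ‖z.1 / z.2‖) = |z.2| + |z.1| := by
      rw [Real.norm_eq_abs, abs_div]
      field_simp
    calc ‖flatQuotient k h z‖
        = |z.2| ^ m * |flatFactor (k + m) z.2| * ‖h (z.1 / z.2)‖ := by
          rw [flatQuotient, norm_smul, ← pow_mul_flatFactor_add k m, Real.norm_eq_abs, abs_mul,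
            abs_pow]
      _ ≤ |z.2| ^ m * |flatFactor (k + m) z.2| * (C * (1 + ‖z.1 / z.2‖) ^ m) := by
          gcongr
          exact hC _
      _ = |flatFactor (k + m) z.2| * (C * (|z.2| + |z.1|) ^ m) := by
          rw [← hclear, mul_pow]
          ring

lemma tendsto_flatQuotient_of_snd_eq_zero (k : ℕ) {h : ℝ → F} {m : ℕ} {C : ℝ}
    (hC : ∀ s, ‖h s‖ ≤ C * (1 + ‖s‖) ^ m) {z : ℝ × ℝ} (hz : z.2 = 0) :
    Tendsto (flatQuotient k h) (𝓝 z) (𝓝 0) := by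
  have hcont : Continuous fun w : ℝ × ℝ =>
      |flatFactor (k + m) w.2| * (C * (|w.2| + |w.1|) ^ m) := by
    have := continuous_flatFactor (k + m)
    fun_prop
  exact squeeze_zero_norm (norm_flatQuotient_le k hC) (by simpa [hz] using hcont.tendsto z)

lemma hasFDerivAt_flatQuotient_of_snd_eq_zero (k : ℕ) {h : ℝ → F} {m : ℕ} {C : ℝ}
    (hC : ∀ s, ‖h s‖ ≤ C * (1 + ‖s‖) ^ m) {z : ℝ × ℝ} (hz : z.2 = 0) :
    HasFDerivAt (flatQuotient k h) (0 : ℝ × ℝ →L[ℝ] F) z := by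
  have hsnd : (fun w : ℝ × ℝ => w.2) =O[𝓝 z] fun w => w - z :=
    .of_bound' (.of_forall fun w => by simpa [hz] using norm_snd_le (w - z))
  have hflat : flatQuotient (k + 1) h =o[𝓝 z] fun _ => (1 : ℝ) :=
    (isLittleO_one_iff ℝ).2 (tendsto_flatQuotient_of_snd_eq_zero (k + 1) hC hz)
  rw [hasFDerivAt_iff_isLittleO]
  simpa [snd_smul_flatQuotient_succ, flatQuotient_of_snd_eq_zero k h hz] using
    hsnd.norm_right.smul_isLittleO hflat

lemma hasFDerivAt_flatQuotient_of_snd_ne_zero (k : ℕ) {h : ℝ → F} (hh : Differentiable ℝ h)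
    {z : ℝ × ℝ} (hz : z.2 ≠ 0) :
    HasFDerivAt (flatQuotient k h)
      ((ContinuousLinearMap.fst ℝ ℝ ℝ).smulRight (flatQuotient (k + 1) (deriv h) z) +
        (ContinuousLinearMap.snd ℝ ℝ ℝ).smulRight
          (-(k : ℝ) • flatQuotient (k + 1) h z
            - flatQuotient (k + 1) (fun s => s • deriv h s) z
            + (2 : ℝ) • flatQuotient (k + 3) h z)) z := by
  have hinv : HasFDerivAt (fun w : ℝ × ℝ => w.2⁻¹)
      (-(z.2 ^ 2)⁻¹ • ContinuousLinearMap.snd ℝ ℝ ℝ) z :=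
    (hasDerivAt_inv hz).comp_hasFDerivAt z hasFDerivAt_snd
  have hquot : HasFDerivAt (fun w : ℝ × ℝ => w.1 / w.2)
      (z.1 • -(z.2 ^ 2)⁻¹ • ContinuousLinearMap.snd ℝ ℝ ℝ + z.2⁻¹ • ContinuousLinearMap.fst ℝ ℝ ℝ)
      z :=
    hasFDerivAt_fst.mul hinv
  have hcomp := (hh (z.1 / z.2)).hasDerivAt.hasFDerivAt.comp z hquot
  have hfactor : HasFDerivAt (fun w : ℝ × ℝ => flatFactor k w.2)
      ((-k * flatFactor (k + 1) z.2 + 2 * flatFactor (k + 3) z.2) •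
        ContinuousLinearMap.snd ℝ ℝ ℝ) z :=
    (hasDerivAt_flatFactor k hz).comp_hasFDerivAt z hasFDerivAt_snd
  have hlower : flatFactor k z.2 = z.2 * flatFactor (k + 1) z.2 := by
    simp [← pow_mul_flatFactor_add k 1 z.2]
  refine (hfactor.smul hcomp).congr_fderiv (ContinuousLinearMap.ext fun w => ?_)
  simp only [flatQuotient, hlower, Function.comp_apply, add_apply, smul_apply,
    ContinuousLinearMap.comp_apply, ContinuousLinearMap.toSpanSingleton_apply,
    ContinuousLinearMap.smulRight_apply, ContinuousLinearMap.coe_fst',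
    ContinuousLinearMap.coe_snd', smul_eq_mul]
  match_scalars <;> field_simp
  ring

lemma hasFDerivAt_flatQuotient (k : ℕ) {h : ℝ → F} (hh : h.HasTemperateGrowth) (z : ℝ × ℝ) :
    HasFDerivAt (flatQuotient k h)
      ((ContinuousLinearMap.fst ℝ ℝ ℝ).smulRight (flatQuotient (k + 1) (deriv h) z) +
        (ContinuousLinearMap.snd ℝ ℝ ℝ).smulRight
          (-(k : ℝ) • flatQuotient (k + 1) h z
            - flatQuotient (k + 1) (fun s => s • deriv h s) z
            + (2 : ℝ) • flatQuotient (k + 3) h z)) z := by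
  by_cases hz : z.2 = 0
  · obtain ⟨m, C, hC⟩ := hh.2 0
    simp only [norm_iteratedFDeriv_zero] at hC
    simpa [flatQuotient_of_snd_eq_zero _ _ hz] using
      hasFDerivAt_flatQuotient_of_snd_eq_zero k hC hz
  · exact hasFDerivAt_flatQuotient_of_snd_ne_zero k (hh.1.differentiable (by simp)) hz

theorem contDiff_flatQuotient (k : ℕ) {h : ℝ → F} (hh : h.HasTemperateGrowth) :
    ContDiff ℝ ∞ (flatQuotient k h) := by
  rw [contDiff_infty]
  intro n
  induction n generalizing k h with
  | zero =>
    exact contDiff_zero.2 (continuous_iff_continuousAt.2 fun z =>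
      (hasFDerivAt_flatQuotient k hh z).continuousAt)
  | succ n ih =>
    have hderiv := hasTemperateGrowth_deriv hh
    push_cast
    exact contDiff_succ_iff_hasFDerivAt.2 ⟨_, by fun_prop, hasFDerivAt_flatQuotient k hh⟩

end FlatQuotient

section PoissonBracket

lemma dependsOn_apply {ι β : Type*} (i : ι) : DependsOn (fun x : ι → β => x i) {i} :=
  fun _ _ h => h i rfl

lemma pderiv6_apply (i j : Fin 6) (x : Fin 6 → ℝ) :
    pderiv6 i (fun y => y j) x = if j = i then 1 else 0 := by
  simp [pderiv6, (hasFDerivAt_apply (𝕜 := ℝ) j x).fderiv, Pi.single_apply]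

variable {𝕜 E F : Type*} [NontriviallyNormedField 𝕜] [NormedAddCommGroup E] [NormedSpace 𝕜 E]
  [NormedAddCommGroup F] [NormedSpace 𝕜 F]

lemma fderiv_apply_eq_zero_of_forall_add_smul_eq {f : E → F} {x v : E}
    (hf : ∀ t : 𝕜, f (x + t • v) = f x) : fderiv 𝕜 f x v = 0 := by
  by_cases hdiff : DifferentiableAt 𝕜 f x
  · rw [← hdiff.lineDeriv_eq_fderiv, lineDeriv]
    simp [hf]
  · simp [fderiv_zero_of_not_differentiableAt hdiff]

lemma pderiv6_eq_zero_of_dependsOn {F : (Fin 6 → ℝ) → ℝ} {s : Set (Fin 6)} (hF : DependsOn F s)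
    {i : Fin 6} (hi : i ∉ s) (x : Fin 6 → ℝ) : pderiv6 i F x = 0 :=
  fderiv_apply_eq_zero_of_forall_add_smul_eq fun t => hF fun j hj => by
    simp [ne_of_mem_of_not_mem hj hi]

/- The coordinate conjugate to the one of index `j` has index `j + 3` modulo `6`. -/
lemma poisson6_eq_zero_of_dependsOn {F G : (Fin 6 → ℝ) → ℝ} {s t : Set (Fin 6)}
    (hF : DependsOn F s) (hG : DependsOn G t) (hst : ∀ j ∈ s, j + 3 ∉ t) (x : Fin 6 → ℝ) :
    poisson6 F G x = 0 := by
  have hmul (j : Fin 6) : pderiv6 j F x * pderiv6 (j + 3) G x = 0 := by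
    by_cases hj : j ∈ s
    · rw [pderiv6_eq_zero_of_dependsOn hG (hst j hj), mul_zero]
    · rw [pderiv6_eq_zero_of_dependsOn hF hj, zero_mul]
  refine Finset.sum_eq_zero fun i _ => ?_
  fin_cases i
  · exact sub_eq_zero.2 ((hmul 0).trans (hmul 3).symm)
  · exact sub_eq_zero.2 ((hmul 1).trans (hmul 4).symm)
  · exact sub_eq_zero.2 ((hmul 2).trans (hmul 5).symm)

end PoissonBracket

section DenseOpen

lemma dense_of_forall_dense_update {ι : Type*} {X : ι → Type*} [DecidableEq ι]
    [∀ i, TopologicalSpace (X i)] {s : Set (∀ i, X i)} (i : ι)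
    (h : ∀ x, Dense {t : X i | Function.update x i t ∈ s}) : Dense s := by
  intro x
  have hx : Function.update x i (x i) ∈ closure s :=
    map_mem_closure (by fun_prop) (h x (x i)) fun _ ht => ht
  rwa [Function.update_eq_self] at hx

lemma isOpen_apply_ne {ι : Type*} {X : ι → Type*} [∀ i, TopologicalSpace (X i)] (i : ι) (a : X i)
    [T1Space (X i)] : IsOpen {x : ∀ i, X i | x i ≠ a} :=
  isOpen_compl_singleton.preimage (continuous_apply i)

lemma dense_apply_ne {ι : Type*} {X : ι → Type*} [∀ i, TopologicalSpace (X i)] (i : ι) (a : X i)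
    [(𝓝[≠] a).NeBot] : Dense {x : ∀ i, X i | x i ≠ a} :=
  (dense_compl_singleton a).preimage (isOpenMap_eval i)

lemma dense_ne_zero_of_analyticOnNhd {𝕜 E : Type*} [NontriviallyNormedField 𝕜]
    [ConnectedSpace 𝕜] [NormedAddCommGroup E] [NormedSpace 𝕜 E] {f : 𝕜 → E}
    (hf : AnalyticOnNhd 𝕜 f Set.univ) {x : 𝕜} (hx : f x ≠ 0) : Dense {y | f y ≠ 0} := by
  rw [dense_iff_closure_eq, Set.eq_univ_iff_forall]
  intro y
  rcases (hf y trivial).eventually_eq_zero_or_eventually_ne_zero with h | h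
  · exact absurd (hf.eqOn_zero_of_preconnected_of_eventuallyEq_zero isPreconnected_univ trivial h
      trivial) hx
  · exact mem_closure_iff_frequently.2 (h.frequently.filter_mono nhdsWithin_le_nhds)

end DenseOpen

section LinearIndependence

variable {n : Type*} [Fintype n] [DecidableEq n]

lemma linearIndependent_of_det_dual_apply_ne_zero {R M : Type*} [CommRing R] [IsDomain R]
    [AddCommGroup M] [Module R M] (u : n → M) (φ : n → Module.Dual R M)
    (h : (Matrix.of fun i j => φ j (u i)).det ≠ 0) : LinearIndependent R u :=
  .of_comp (LinearMap.pi φ) (Matrix.linearIndependent_rows_of_det_ne_zero h)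

lemma linearIndependent_fderiv_of_det_pderiv6_ne_zero (F : n → (Fin 6 → ℝ) → ℝ) (c : n → Fin 6)
    {x : Fin 6 → ℝ} (h : (Matrix.of fun i j => pderiv6 (c j) (F i) x).det ≠ 0) :
    LinearIndependent ℝ fun i => fderiv ℝ (F i) x :=
  linearIndependent_of_det_dual_apply_ne_zero _
    (fun j => (ContinuousLinearMap.apply ℝ ℝ (Pi.single (c j) 1)).toLinearMap) h

end LinearIndependence

section JordanBox

/-- The Hamiltonian `H` of the sub-Riemannian geodesic flow on the suspension. -/
noncomputable def jordanHamiltonian (x : Fin 6 → ℝ) : ℝ :=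
  (1 / 2) * (((Real.cos (2 * Real.pi * x 2) - x 2 * Real.sin (2 * Real.pi * x 2)) * x 3 +
    Real.sin (2 * Real.pi * x 2) * x 4) ^ 2 + x 5 ^ 2)

/-- The integral `I₃`, smooth but not analytic along `p₁ = 0`. -/
noncomputable def jordanIntegral (x : Fin 6 → ℝ) : ℝ :=
  if x 3 = 0 then 0 else
    Real.sin (2 * Real.pi * x 4 / x 3) * Real.exp (-(x 3 ^ (-2 : ℤ)))

/-- The deck transformation `T`: the lift to `ℝ⁶` of the gluing of the suspension. -/
def jordanShift (x : Fin 6 → ℝ) : Fin 6 → ℝ :=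
  ![x 0, x 1, x 2 + 1, x 3, x 3 + x 4, x 5]

lemma jordanIntegral_eq_flatQuotient (x : Fin 6 → ℝ) :
    jordanIntegral x = flatQuotient 0 (fun s => Real.sin (2 * Real.pi * s)) (x 4, x 3) := by
  rcases eq_or_ne (x 3) 0 with h3 | h3
  · simp [jordanIntegral, flatQuotient, h3]
  · simp [jordanIntegral, flatQuotient, h3, flatFactor_zero_left_of_ne_zero, mul_div_assoc,
      mul_comm, zpow_ofNat]

lemma hasTemperateGrowth_sin_two_pi_mul :
    Function.HasTemperateGrowth fun s : ℝ => Real.sin (2 * Real.pi * s) :=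
  hasTemperateGrowth_sin.comp (ContinuousLinearMap.mul ℝ ℝ (2 * Real.pi)).hasTemperateGrowth

theorem contDiff_jordanIntegral : ContDiff ℝ ∞ jordanIntegral := by
  rw [funext jordanIntegral_eq_flatQuotient]
  exact (contDiff_flatQuotient 0 hasTemperateGrowth_sin_two_pi_mul).comp
    (g := flatQuotient 0 fun s : ℝ => Real.sin (2 * Real.pi * s))
    (f := fun x : Fin 6 → ℝ => (x 4, x 3)) (by fun_prop)

lemma dependsOn_jordanHamiltonian : DependsOn jordanHamiltonian {2, 3, 4, 5} := fun x y hxy => by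
  simp_all [jordanHamiltonian]

lemma dependsOn_jordanIntegral : DependsOn jordanIntegral {3, 4} := fun x y hxy => by
  simp_all [jordanIntegral]

lemma jordanHamiltonian_comp_jordanShift : jordanHamiltonian ∘ jordanShift = jordanHamiltonian := by
  funext x
  simp only [jordanHamiltonian, jordanShift, Function.comp_apply, Matrix.cons_val, mul_add, mul_one,
    Real.cos_add_two_pi, Real.sin_add_two_pi]
  ring

lemma jordanIntegral_comp_jordanShift : jordanIntegral ∘ jordanShift = jordanIntegral := by
  funext x
  rcases eq_or_ne (x 3) 0 with h3 | h3
  · simp [jordanIntegral, jordanShift, h3]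
  · have hphase : 2 * Real.pi * (x 3 + x 4) / x 3 = 2 * Real.pi * x 4 / x 3 + 2 * Real.pi := by
      field
    simp [jordanIntegral, jordanShift, h3, hphase]

lemma pderiv6_five_jordanHamiltonian (x : Fin 6 → ℝ) : pderiv6 5 jordanHamiltonian x = x 5 := by
  have hdiff : DifferentiableAt ℝ jordanHamiltonian x := by
    unfold jordanHamiltonian
    fun_prop
  have hline : HasLineDerivAt ℝ jordanHamiltonian (x 5) x (Pi.single 5 1) := by
    unfold HasLineDerivAt
    have h := ((((hasDerivAt_id (0 : ℝ)).const_add (x 5)).pow 2).const_add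
      (((Real.cos (2 * Real.pi * x 2) - x 2 * Real.sin (2 * Real.pi * x 2)) * x 3 +
        Real.sin (2 * Real.pi * x 2) * x 4) ^ 2)).const_mul (1 / 2)
    simpa [jordanHamiltonian] using h
  rw [pderiv6, ← hdiff.lineDeriv_eq_fderiv, hline.lineDeriv]

lemma pderiv6_four_jordanIntegral (x : Fin 6 → ℝ) :
    pderiv6 4 jordanIntegral x =
      flatFactor 1 (x 3) * (2 * Real.pi * Real.cos (2 * Real.pi * x 4 / x 3)) := by
  have hsin (s : ℝ) : HasDerivAt (fun s => Real.sin (2 * Real.pi * s))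
      (2 * Real.pi * Real.cos (2 * Real.pi * s)) s := by
    simpa [mul_comm] using ((hasDerivAt_id s).const_mul (2 * Real.pi)).sin
  have hproj : HasFDerivAt (fun y : Fin 6 → ℝ => (y 4, y 3)) _ x :=
    (hasFDerivAt_apply (𝕜 := ℝ) 4 x).prodMk (hasFDerivAt_apply 3 x)
  have hcomp := HasFDerivAt.comp (g := flatQuotient 0 fun s : ℝ => Real.sin (2 * Real.pi * s)) x
    (hasFDerivAt_flatQuotient 0 hasTemperateGrowth_sin_two_pi_mul (x 4, x 3)) hproj
  rw [pderiv6, funext jordanIntegral_eq_flatQuotient]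
  refine (DFunLike.congr_fun hcomp.fderiv _).trans ?_
  simp [flatQuotient, (hsin _).deriv, mul_div_assoc]

lemma linearIndependent_fderiv_jordan {x : Fin 6 → ℝ} (h3 : x 3 ≠ 0) (h5 : x 5 ≠ 0)
    (hcos : Real.cos (2 * Real.pi * x 4 / x 3) ≠ 0) :
    LinearIndependent ℝ
      ![fderiv ℝ jordanHamiltonian x, fderiv ℝ (fun y => y 3) x, fderiv ℝ jordanIntegral x] := by
  have hI4 : pderiv6 4 jordanIntegral x ≠ 0 := by
    rw [pderiv6_four_jordanIntegral]
    exact mul_ne_zero (flatFactor_ne_zero 1 h3) (mul_ne_zero Real.two_pi_pos.ne' hcos)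
  have hI5 : pderiv6 5 jordanIntegral x = 0 :=
    pderiv6_eq_zero_of_dependsOn dependsOn_jordanIntegral (by simp) x
  have hind := linearIndependent_fderiv_of_det_pderiv6_ne_zero (x := x)
    ![jordanHamiltonian, fun y => y 3, jordanIntegral] ![5, 3, 4] (by
      simp [Matrix.det_fin_three, pderiv6_five_jordanHamiltonian, pderiv6_apply, hI5, h5, hI4])
  convert! hind using 1
  funext i
  fin_cases i <;> rfl

/-- The set where `p₁`, `p₃` and `cos (2πp₂/p₁)` do not vanish, on which the three integrals are
functionally independent. -/
def jordanRegularSet : Set (Fin 6 → ℝ) :=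
  {x | x 3 ≠ 0} ∩ {x | x 5 ≠ 0} ∩ {x | Real.cos (2 * Real.pi * x 4 / x 3) ≠ 0}

lemma isOpen_jordanRegularSet : IsOpen jordanRegularSet := by
  refine ContinuousOn.isOpen_inter_preimage (t := {0}ᶜ) (fun x hx => ?_)
    ((isOpen_apply_ne 3 0).inter (isOpen_apply_ne 5 0)) isOpen_compl_singleton
  have := hx.1
  fun_prop (disch := assumption)

lemma dense_jordanRegularSet : Dense jordanRegularSet := by
  refine ((dense_apply_ne 3 0).inter_of_isOpen_left (dense_apply_ne 5 0)
    (isOpen_apply_ne 3 0)).inter_of_isOpen_left ?_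
    ((isOpen_apply_ne 3 0).inter (isOpen_apply_ne 5 0))
  refine dense_of_forall_dense_update 4 fun x => ?_
  have hanalytic : AnalyticOnNhd ℝ (fun t => Real.cos (2 * Real.pi * t / x 3)) Set.univ :=
    fun t _ => by fun_prop
  -- Also for `x 3 = 0`: there the phase is the junk value `t / 0 = 0` and the cosine is `1`.
  simpa using dense_ne_zero_of_analyticOnNhd (x := 0) hanalytic (by simp)

end JordanBox

theorem smooth_integrability_jordan_box_case
    (H I₂ I₃ : (Fin 6 → ℝ) → ℝ) (T : (Fin 6 → ℝ) → (Fin 6 → ℝ))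
    (hH : H = fun x => (1/2) *
      (((Real.cos (2 * Real.pi * x 2) - x 2 * Real.sin (2 * Real.pi * x 2)) * x 3 +
          Real.sin (2 * Real.pi * x 2) * x 4)^2 + (x 5)^2))
    (hI₂ : I₂ = fun x => x 3)
    (hI₃ : I₃ = fun x => if x 3 = 0 then 0 else
      Real.sin (2 * Real.pi * x 4 / x 3) * Real.exp (-((x 3) ^ (-2 : ℤ))))
    (hT : T = fun x => ![x 0, x 1, x 2 + 1, x 3, x 3 + x 4, x 5]) :
    ContDiff ℝ (⊤ : ℕ∞) I₃ ∧
    ((∀ x, poisson6 H I₂ x = 0) ∧ (∀ x, poisson6 H I₃ x = 0) ∧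
      (∀ x, poisson6 I₂ I₃ x = 0)) ∧
    (H ∘ T = H ∧ I₂ ∘ T = I₂ ∧ I₃ ∘ T = I₃) ∧
    (∃ U : Set (Fin 6 → ℝ), IsOpen U ∧ Dense U ∧ ∀ x ∈ U,
      LinearIndependent ℝ ![fderiv ℝ H x, fderiv ℝ I₂ x, fderiv ℝ I₃ x]) := by
  subst hH hI₂ hI₃ hT
  have hI₂ := dependsOn_apply (β := ℝ) (3 : Fin 6)
  refine ⟨contDiff_jordanIntegral, ⟨?_, ?_, ?_⟩,
    ⟨jordanHamiltonian_comp_jordanShift, rfl, jordanIntegral_comp_jordanShift⟩,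
    jordanRegularSet, isOpen_jordanRegularSet, dense_jordanRegularSet, ?_⟩
  · exact poisson6_eq_zero_of_dependsOn dependsOn_jordanHamiltonian hI₂ (by simp)
  · exact poisson6_eq_zero_of_dependsOn dependsOn_jordanHamiltonian dependsOn_jordanIntegral
      (by simp)
  · exact poisson6_eq_zero_of_dependsOn hI₂ dependsOn_jordanIntegral (by simp)
  · rintro x ⟨⟨h3, h5⟩, hcos⟩
    exact linearIndependent_fderiv_jordan h3 h5 hcos
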